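/- arXiv:2105.13463 — 6 statements merged into one kernel-verified Lean document; each statement's English description precedes it below -/
import Mathlib

section
/- Let Y ⊆ ℝⁿ be nonempty, convex and compact, let F : ℝⁿ → ℝⁿ be monotone on Y, let G : ℝⁿ → ℝⁿ, and let τ > 0 and ε ≥ 0. If x ∈ Y satisfies ⟪F(x) + (1/τ)·G(x), y − x⟫ ≥ −ε for all y ∈ Y, then ⟪G(x), y − x⟫ ≥ −ε·τ for every y ∈ SOL(F,Y). -/
open scoped InnerProductSpace BigOperators

/-- `SOL Ψ K` is the solution set of the variational inequality VI(Ψ, K). -/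
def SOL {n : ℕ} (Ψ : EuclideanSpace ℝ (Fin n) → EuclideanSpace ℝ (Fin n))
    (K : Set (EuclideanSpace ℝ (Fin n))) : Set (EuclideanSpace ℝ (Fin n)) :=
  {x | x ∈ K ∧ ∀ y ∈ K, ⟪Ψ x, y - x⟫_ℝ ≥ 0}

theorem stmt0 {n : ℕ} (Y : Set (EuclideanSpace ℝ (Fin n)))
    (hYne : Y.Nonempty) (hYconv : Convex ℝ Y) (hYcomp : IsCompact Y)
    (F G : EuclideanSpace ℝ (Fin n) → EuclideanSpace ℝ (Fin n))
    (hFmono : ∀ x ∈ Y, ∀ y ∈ Y, ⟪F x - F y, x - y⟫_ℝ ≥ 0)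
    (τ ε : ℝ) (hτ : 0 < τ) (hε : 0 ≤ ε)
    (x : EuclideanSpace ℝ (Fin n)) (hx : x ∈ Y)
    (hsub : ∀ y ∈ Y, ⟪F x + (1 / τ) • G x, y - x⟫_ℝ ≥ -ε) :
    ∀ y ∈ SOL F Y, ⟪G x, y - x⟫_ℝ ≥ -(ε * τ) := by
  rintro y ⟨hyY, hy⟩
  -- Monotonicity transfers the variational inequality at `y` to `F x`: `⟪F x, y - x⟫ ≤ 0`.
  have hFx : ⟪F x, y - x⟫_ℝ ≤ 0 := by
    have h1 := hFmono x hx y hyY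
    have h2 := hy x hx
    rw [inner_sub_left] at h1
    rw [← neg_sub x y, inner_neg_right]
    linarith
  have h3 := hsub y hyY
  rw [inner_add_left, real_inner_smul_left] at h3
  have h4 : -ε ≤ ⟪G x, y - x⟫_ℝ / τ := by
    rw [div_eq_inv_mul, ← one_div]
    linarith
  have h5 := (le_div_iff₀ hτ).mp h4
  linarith
end

section
/- Let K ⊆ ℝⁿ be nonempty, closed and convex, let Ψ : ℝⁿ → ℝⁿ, and let ε ≥ 0. Let x ∈ K satisfy ⟪Ψ(x), y − x⟫ ≥ −ε for all y ∈ K, and let z ∈ K satisfy the projection characterization ⟪(x − Ψ(x)) − z, y − z⟫ ≤ 0 for all y ∈ K (i.e., z = P_K(x − Ψ(x))). Then ‖z − x‖² ≤ ε; in particular ‖z − x‖ ≤ √ε. -/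
open scoped InnerProductSpace BigOperators

theorem stmt4 {n : ℕ} (K : Set (EuclideanSpace ℝ (Fin n)))
    (hKne : K.Nonempty) (hKcl : IsClosed K) (hKconv : Convex ℝ K)
    (Ψ : EuclideanSpace ℝ (Fin n) → EuclideanSpace ℝ (Fin n))
    (ε : ℝ) (hε : 0 ≤ ε)
    (x : EuclideanSpace ℝ (Fin n)) (hx : x ∈ K)
    (happrox : ∀ y ∈ K, ⟪Ψ x, y - x⟫_ℝ ≥ -ε)
    (z : EuclideanSpace ℝ (Fin n)) (hz : z ∈ K)
    (hproj : ∀ y ∈ K, ⟪(x - Ψ x) - z, y - z⟫_ℝ ≤ 0) :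
    ‖z - x‖ ^ 2 ≤ ε ∧ ‖z - x‖ ≤ Real.sqrt ε := by
  -- Testing the projection inequality at `x` gives `‖z - x‖² ≤ -⟪Ψ x, z - x⟫`,
  -- and approximate optimality tested at `z` bounds the right-hand side by `ε`.
  have key : ⟪(x - Ψ x) - z, x - z⟫_ℝ = ‖z - x‖ ^ 2 + ⟪Ψ x, z - x⟫_ℝ := by
    rw [show (x - Ψ x) - z = -(z - x) - Ψ x by abel, show x - z = -(z - x) by abel,
      inner_sub_left, inner_neg_neg, inner_neg_right, real_inner_self_eq_norm_sq]
    ring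
  have hsq : ‖z - x‖ ^ 2 ≤ ε := by
    linarith [hproj x hx, happrox z hz]
  exact ⟨hsq, Real.le_sqrt_of_sq_le hsq⟩
end

section
/- Let K ⊆ ℝⁿ be nonempty, closed and convex, let Ψ : ℝⁿ → ℝⁿ, and let ε̂ ≥ 0. Suppose Ω ≥ 0 and Ξ ≥ 0 satisfy ‖v − y‖ ≤ Ω for all v, y ∈ K and ‖Ψ(y)‖ ≤ Ξ for all y ∈ K. Let x ∈ K and let z ∈ K satisfy ⟪(x − Ψ(x)) − z, y − z⟫ ≤ 0 for all y ∈ K (i.e., z = P_K(x − Ψ(x))). If ‖z − x‖ ≤ ε̂, then ⟪Ψ(x), y − x⟫ ≥ −(Ω + Ξ)·ε̂ for all y ∈ K. -/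
/-!
Write `⟪Ψ x, y - x⟫ = ⟪Ψ x, y - z⟫ + ⟪Ψ x, z - x⟫`. The projection inequality bounds the first
summand below by `-⟪z - x, y - z⟫`, which Cauchy–Schwarz and the diameter bound make at least
`-Ω ε'`; Cauchy–Schwarz and the bound on `Ψ` make the second summand at least `-Ξ ε'`.
-/

open scoped InnerProductSpace BigOperators

theorem stmt5 {n : ℕ} (K : Set (EuclideanSpace ℝ (Fin n)))
    (hKne : K.Nonempty) (hKcl : IsClosed K) (hKconv : Convex ℝ K)
    (Ψ : EuclideanSpace ℝ (Fin n) → EuclideanSpace ℝ (Fin n))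
    (ε' : ℝ) (hε' : 0 ≤ ε')
    (Ω Ξ : ℝ) (hΩ : 0 ≤ Ω) (hΞ : 0 ≤ Ξ)
    (hΩbound : ∀ v ∈ K, ∀ y ∈ K, ‖v - y‖ ≤ Ω)
    (hΞbound : ∀ y ∈ K, ‖Ψ y‖ ≤ Ξ)
    (x : EuclideanSpace ℝ (Fin n)) (hx : x ∈ K)
    (z : EuclideanSpace ℝ (Fin n)) (hz : z ∈ K)
    (hproj : ∀ y ∈ K, ⟪(x - Ψ x) - z, y - z⟫_ℝ ≤ 0)
    (hres : ‖z - x‖ ≤ ε') :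
    ∀ y ∈ K, ⟪Ψ x, y - x⟫_ℝ ≥ -((Ω + Ξ) * ε') := by
  intro y hy
  have hsplit : ⟪(x - Ψ x) - z, y - z⟫_ℝ = -⟪z - x, y - z⟫_ℝ - ⟪Ψ x, y - z⟫_ℝ := by
    rw [show (x - Ψ x) - z = -(z - x) - Ψ x by abel, inner_sub_left, inner_neg_left]
  have hsum : ⟪Ψ x, y - x⟫_ℝ = ⟪Ψ x, y - z⟫_ℝ + ⟪Ψ x, z - x⟫_ℝ := by
    rw [← inner_add_right, sub_add_sub_cancel]
  have h1 : ⟪z - x, y - z⟫_ℝ ≤ ε' * Ω :=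
    (real_inner_le_norm _ _).trans
      (mul_le_mul hres (hΩbound y hy z hz) (norm_nonneg _) hε')
  have h2 : -(Ξ * ε') ≤ ⟪Ψ x, z - x⟫_ℝ :=
    (neg_le_neg (mul_le_mul (hΞbound x hx) hres (norm_nonneg _) hΞ)).trans
      (neg_le_of_abs_le (abs_real_inner_le_norm _ _))
  linarith [hproj y hy]
end

section
/- Let Y ⊆ ℝⁿ be nonempty, closed and convex, let Φ : ℝⁿ → ℝⁿ be Lipschitz continuous on Y with constant L < 1, and let ε ≥ 0. Let z ∈ Y satisfy the dual approximate condition ⟪Φ(y), y − z⟫ ≥ −ε for all y ∈ Y, and let v ∈ Y satisfy ⟪(z − Φ(z)) − v, y − v⟫ ≤ 0 for all y ∈ Y (i.e., v = P_Y(z − Φ(z))). Then (1 − L)·‖z − v‖² ≤ ε; in particular ‖z − v‖ ≤ √(ε/(1 − L)). -/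
/-!
Put `d = z - v`. The projection inequality tested at `z` gives `‖d‖² ≤ ⟪Φ z, d⟫`, and the dual
condition tested at `v` gives `⟪Φ v, d⟫ ≤ ε`. By Cauchy–Schwarz and the Lipschitz bound,
`⟪Φ z - Φ v, d⟫ ≤ L ‖d‖²`. Adding the three yields `‖d‖² ≤ ε + L ‖d‖²`.
-/

open scoped InnerProductSpace BigOperators

theorem stmt13 {n : ℕ} (Y : Set (EuclideanSpace ℝ (Fin n)))
    (hYne : Y.Nonempty) (hYcl : IsClosed Y) (hYconv : Convex ℝ Y)
    (Φ : EuclideanSpace ℝ (Fin n) → EuclideanSpace ℝ (Fin n))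
    (L : ℝ) (hL0 : 0 ≤ L) (hL1 : L < 1)
    (hLip : ∀ x ∈ Y, ∀ y ∈ Y, ‖Φ x - Φ y‖ ≤ L * ‖x - y‖)
    (ε : ℝ) (hε : 0 ≤ ε)
    (z : EuclideanSpace ℝ (Fin n)) (hz : z ∈ Y)
    (hdual : ∀ y ∈ Y, ⟪Φ y, y - z⟫_ℝ ≥ -ε)
    (v : EuclideanSpace ℝ (Fin n)) (hv : v ∈ Y)
    (hproj : ∀ y ∈ Y, ⟪(z - Φ z) - v, y - v⟫_ℝ ≤ 0) :
    (1 - L) * ‖z - v‖ ^ 2 ≤ ε ∧ ‖z - v‖ ≤ Real.sqrt (ε / (1 - L)) := by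
  have hbound : (1 - L) * ‖z - v‖ ^ 2 ≤ ε := by
    have hP := hproj z hz
    rw [sub_right_comm, inner_sub_left, real_inner_self_eq_norm_sq] at hP
    have hD := hdual v hv
    rw [← neg_sub z v, inner_neg_right] at hD
    have hC := real_inner_le_norm (Φ z - Φ v) (z - v)
    rw [inner_sub_left] at hC
    have hM := mul_le_mul_of_nonneg_right (hLip z hz v hv) (norm_nonneg (z - v))
    linarith
  refine ⟨hbound, Real.le_sqrt_of_sq_le ?_⟩
  rw [le_div_iff₀ (sub_pos.mpr hL1), mul_comm]
  exact hbound
end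

section
/- Let Y ⊆ ℝⁿ be nonempty, convex and compact, let F, G : ℝⁿ → ℝⁿ be continuous with F monotone on Y, let c > 0 and β > 1, and let τᵢ > 0 be a sequence with τᵢ → +∞. Let wᵢ ∈ Y satisfy ⟪F(wᵢ) + (1/τᵢ)·G(wᵢ), y − wᵢ⟫ ≥ −c/τᵢ^β for all y ∈ Y and all i. Then every limit point w of the sequence {wᵢ} is a solution of the nested variational inequality: w ∈ SOL(F,Y) and ⟪G(w), y − w⟫ ≥ 0 for all y ∈ SOL(F,Y). -/
/-!
Pass to the limit along the convergent subsequence. Since `1 / τᵢ → 0` and `c / τᵢ ^ β → 0`, the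
perturbed inequality becomes the variational inequality for `F` at the limit. For the outer
inequality, let `y ∈ SOL F Y`: monotonicity of `F` gives `⟪F wᵢ, y - wᵢ⟫ ≤ ⟪F y, y - wᵢ⟫ ≤ 0`, so
the `F`-term can be dropped from the perturbed inequality. Multiplying what remains by `τᵢ` gives
`⟪G wᵢ, y - wᵢ⟫ ≥ -c τᵢ ^ (1 - β)`, whose right-hand side tends to `0` because `β > 1`.
-/

open scoped InnerProductSpace BigOperators
open Filter

theorem stmt16 {n : ℕ} (Y : Set (EuclideanSpace ℝ (Fin n)))
    (hYne : Y.Nonempty) (hYconv : Convex ℝ Y) (hYcomp : IsCompact Y)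
    (F G : EuclideanSpace ℝ (Fin n) → EuclideanSpace ℝ (Fin n))
    (hFcont : Continuous F) (hGcont : Continuous G)
    (hFmono : ∀ x ∈ Y, ∀ y ∈ Y, ⟪F x - F y, x - y⟫_ℝ ≥ 0)
    (c β : ℝ) (hc : 0 < c) (hβ : 1 < β)
    (τ : ℕ → ℝ) (hτpos : ∀ i, 0 < τ i) (hτ : Tendsto τ atTop atTop)
    (w : ℕ → EuclideanSpace ℝ (Fin n)) (hwY : ∀ i, w i ∈ Y)
    (hsub : ∀ i, ∀ y ∈ Y,
      ⟪F (w i) + (1 / τ i) • G (w i), y - w i⟫_ℝ ≥ -(c / (τ i) ^ β)) :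
    ∀ w' : EuclideanSpace ℝ (Fin n),
      (∃ φ : ℕ → ℕ, StrictMono φ ∧ Tendsto (fun i => w (φ i)) atTop (nhds w')) →
      w' ∈ SOL F Y ∧ ∀ y ∈ SOL F Y, ⟪G w', y - w'⟫_ℝ ≥ 0 := by
  rintro w' ⟨φ, hφ, hw⟩
  have hτφ : Tendsto (fun i => τ (φ i)) atTop atTop := hτ.comp hφ.tendsto_atTop
  have hw'Y : w' ∈ Y := hYcomp.isClosed.mem_of_tendsto hw (Eventually.of_forall fun i => hwY _)
  have hF : Tendsto (fun i => F (w (φ i))) atTop (nhds (F w')) := (hFcont.tendsto w').comp hw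
  have hG : Tendsto (fun i => G (w (φ i))) atTop (nhds (G w')) := (hGcont.tendsto w').comp hw
  have hdiff (y : EuclideanSpace ℝ (Fin n)) :
      Tendsto (fun i => y - w (φ i)) atTop (nhds (y - w')) := tendsto_const_nhds.sub hw
  refine ⟨⟨hw'Y, fun y hy => ?_⟩, fun y hy => ?_⟩
  · have hinv : Tendsto (fun i => 1 / τ (φ i)) atTop (nhds 0) := by
      simpa only [one_div, Function.comp_def] using tendsto_inv_atTop_zero.comp hτφ
    have herr : Tendsto (fun i => -(c / τ (φ i) ^ β)) atTop (nhds 0) := by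
      simpa using (((tendsto_rpow_atTop (by linarith : 0 < β)).comp hτφ).const_div_atTop c).neg
    have hlhs := (hF.add (hinv.smul hG)).inner (𝕜 := ℝ) (hdiff y)
    rw [zero_smul, add_zero] at hlhs
    exact le_of_tendsto_of_tendsto' herr hlhs fun i => hsub (φ i) y hy
  · have herr : Tendsto (fun i => -(c / τ (φ i) ^ (β - 1))) atTop (nhds 0) := by
      simpa using (((tendsto_rpow_atTop (sub_pos.2 hβ)).comp hτφ).const_div_atTop c).neg
    refine le_of_tendsto_of_tendsto' herr (hG.inner (𝕜 := ℝ) (hdiff y)) fun i => ?_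
    have hpos := hτpos (φ i)
    have hmono := hFmono y hy.1 _ (hwY (φ i))
    have hsol := hy.2 _ (hwY (φ i))
    have hpert := hsub (φ i) y hy.1
    rw [inner_sub_left] at hmono
    rw [← neg_sub, inner_neg_right] at hsol
    rw [inner_add_left, real_inner_smul_left] at hpert
    have hdrop : -(c / τ (φ i) ^ β) ≤ 1 / τ (φ i) * ⟪G (w (φ i)), y - w (φ i)⟫_ℝ := by linarith
    have hscaled := mul_le_mul_of_nonneg_left hdrop hpos.le
    rw [← mul_assoc, mul_one_div_cancel hpos.ne', one_mul] at hscaled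
    have hrpow : -(c / τ (φ i) ^ (β - 1)) = τ (φ i) * -(c / τ (φ i) ^ β) := by
      rw [Real.rpow_sub_one hpos.ne']
      have := (Real.rpow_pos_of_pos hpos β).ne'
      field_simp
    rwa [hrpow]
end

section
/- Let G(y₁,y₂) = (−y₂/2, y₁/2) and F(y₁,y₂) = (y₂, −y₁) on ℝ², let B be the closed unit ball of ℝ², and fix constants τ ≥ 1 and γ > 0. Define the sequence yₖ by y₀ ∈ B with ‖y₀‖ = 1 and y_{k+1} = P_B(yₖ − γ·(F(yₖ) + (1/τ)·G(yₖ))), where P_B is the Euclidean projection onto B. Then ‖y_{k+1}‖ = min{1, √(1 + γ²·(1/(2τ) − 1)²)·‖yₖ‖} for every k, and consequently ‖yₖ‖ = 1 for every k; in particular the sequence {yₖ} never approaches the origin, the unique solution of the nested problem. -/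
/-!
With `c = 1 / (2τ) - 1`, the unprojected step sends `(y₁, y₂)` to `(y₁ + γ c y₂, y₂ - γ c y₁)`, a
rotation composed with scaling by `√(1 + γ² c²) ≥ 1`. Projection onto the unit ball replaces the
norm `‖w‖` by `min 1 ‖w‖` (`norm_eq_min_of_variational`), which gives the recursion for the norms.
Since the scaling factor is at least `1`, norm `1` is preserved by every step.
-/

open scoped InnerProductSpace BigOperators

/-- The variational inequality characterising the projection `p` of `w` onto the closed unit ball
determines the norm of `p`. -/
lemma norm_eq_min_of_variational {E : Type*} [NormedAddCommGroup E] [InnerProductSpace ℝ E]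
    (w p : E) (hp : ‖p‖ ≤ 1)
    (h : ∀ u ∈ Metric.closedBall (0 : E) 1, ⟪w - p, u - p⟫_ℝ ≤ 0) :
    ‖p‖ = min 1 ‖w‖ := by
  rcases le_or_gt ‖w‖ 1 with hw | hw
  · have h1 := h w (by simpa using hw)
    rw [real_inner_self_nonpos, sub_eq_zero] at h1
    rw [min_eq_right hw, h1]
  · rw [min_eq_left hw.le]
    by_contra hne
    have hlt : ‖p‖ < 1 := lt_of_le_of_ne hp hne
    have hw0 : ‖w‖ ≠ 0 := by linarith
    have hq : ‖‖w‖⁻¹ • w‖ = 1 := by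
      rw [norm_smul, norm_inv, norm_norm, inv_mul_cancel₀ hw0]
    -- Testing with `q = w / ‖w‖`, Cauchy–Schwarz bounds the inner product below by
    -- `(‖w‖ - ‖p‖) * (1 - ‖p‖) > 0`.
    have h1 := h (‖w‖⁻¹ • w) (by simp only [mem_closedBall_zero_iff, hq, le_refl])
    have hwq : ⟪w, ‖w‖⁻¹ • w⟫_ℝ = ‖w‖ := by
      rw [real_inner_smul_right, real_inner_self_eq_norm_sq]
      field_simp
    have hpq := real_inner_le_norm p (‖w‖⁻¹ • w)
    have hwp := real_inner_le_norm w p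
    rw [hq] at hpq
    rw [inner_sub_left, inner_sub_right, inner_sub_right, hwq, real_inner_self_eq_norm_sq] at h1
    nlinarith [mul_pos (sub_pos.2 (hlt.trans hw)) (sub_pos.2 hlt)]

theorem stmt18 (G F : EuclideanSpace ℝ (Fin 2) → EuclideanSpace ℝ (Fin 2))
    (hG : ∀ y : EuclideanSpace ℝ (Fin 2), G y 0 = -(y 1) / 2 ∧ G y 1 = y 0 / 2)
    (hF : ∀ y : EuclideanSpace ℝ (Fin 2), F y 0 = y 1 ∧ F y 1 = -(y 0))
    (τ γ : ℝ) (hτ : 1 ≤ τ) (hγ : 0 < γ)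
    (y : ℕ → EuclideanSpace ℝ (Fin 2))
    (hy0 : ‖y 0‖ = 1)
    (hyB : ∀ k, y k ∈ Metric.closedBall (0 : EuclideanSpace ℝ (Fin 2)) 1)
    (hproj : ∀ k, ∀ u ∈ Metric.closedBall (0 : EuclideanSpace ℝ (Fin 2)) 1,
      ⟪(y k - γ • (F (y k) + (1 / τ) • G (y k))) - y (k + 1), u - y (k + 1)⟫_ℝ ≤ 0) :
    (∀ k, ‖y (k + 1)‖ =
        min 1 (Real.sqrt (1 + γ ^ 2 * (1 / (2 * τ) - 1) ^ 2) * ‖y k‖)) ∧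
      ∀ k, ‖y k‖ = 1 := by
  have hrec : ∀ k, ‖y (k + 1)‖ =
      min 1 (Real.sqrt (1 + γ ^ 2 * (1 / (2 * τ) - 1) ^ 2) * ‖y k‖) := by
    intro k
    rw [norm_eq_min_of_variational _ _ (mem_closedBall_zero_iff.1 (hyB (k + 1))) (hproj k)]
    congr 1
    rw [EuclideanSpace.norm_eq, EuclideanSpace.norm_eq, ← Real.sqrt_mul (by positivity)]
    congr 1
    have hτ0 : τ ≠ 0 := by linarith
    simp only [Fin.sum_univ_two, Real.norm_eq_abs, sq_abs, PiLp.sub_apply, PiLp.add_apply,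
      PiLp.smul_apply, smul_eq_mul, (hG (y k)).1, (hG (y k)).2, (hF (y k)).1, (hF (y k)).2]
    field_simp
    ring
  refine ⟨hrec, fun k => ?_⟩
  induction k with
  | zero => exact hy0
  | succ k ih =>
    rw [hrec k, ih, mul_one, min_eq_left]
    exact Real.one_le_sqrt.2 (le_add_of_nonneg_right (by positivity))
end
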